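/- Let n, m ≥ 0 be integers, let k be an integer with m ≤ k and 2k ≤ n+m−1, and let a be a real number with a ≠ 0 and a ≠ 1. Then (−a)^{n+m+1} · (1−a)^{k−m−n} · ((2n+2m−2k)! · (n−k−1)!)/((n+m−2k−1)! · (k−m)!) · Σ_{s=0}^{n+m+1} ((n−k)_s (−n−m−1)_s)/((n+m−2k)_s · s!) · a^{−s} = Σ_{i=0}^{m+n−k} a^{i} · C(m+n−k, i) · (−m+k+i+1)_{2(m+n−k−i)} · (1−a)^{−i} · Σ_{ℓ=0}^{i} ((k+2)_ℓ (−k−1)_ℓ (−i)_ℓ)/((−m−i)_ℓ · ℓ!) · (m−i+1+ℓ)_{2i−ℓ} · (1−a)^{ℓ}, where C(p, q) denotes the binomial coefficient. (The left-hand side is a terminating ₂F₁(n−k, −n−m−1; n+m−2k; 1/a) with prefactor (−a)^{n+m+1}(1−a)^{k−m−n} Γ(2n+2m−2k+1)Γ(n−k)/(Γ(n+m−2k)Γ(−m+k+1)), and the inner sum on the right is the regularized terminating series (m−i+1)_{2i} · ₃F₂(k+2, −k−1, −i; −m−i, m−i+1; 1−a).) -/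

import Mathlib

open Finset

/-- The Pochhammer symbol `(z)_k = z(z+1)⋯(z+k−1)` for a real `z`. -/
def poch (z : ℝ) (k : ℕ) : ℝ := ∏ i ∈ Finset.range k, (z + (i : ℝ))

/-!
Write `y_p` for the Bessel polynomial of degree `p` and put `b = 1 - a`, `d = k - m`,
`N = m + n - k`, so that `n = d + N`. Up to the factor `N! b⁻ᴺ`, the double sum is the coefficient
of `X ^ N` in `y_m(aX) y_{k+1}(-abX) y_n(bX)`, and up to elementary factors the `₂F₁` is the
coefficient of `X ^ (2N)` in `(1 - aX) ^ (m + n + 1) / (1 - X) ^ (d + 1)`.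

Both coefficients satisfy the same contiguous relation in `(m, d, N)`, up to the normalization
`(2N)! / N!`. For the triple product it comes from differentiating: the first-order recurrences for
`y_p` express each derivative through a neighbouring product, and since `1/a + 1/b = 1/(ab)` the
terms without derivatives combine. Induction on `m` then starts from `m = -1`, where
`y_{-1} = y_0 = 1` and the product of the two remaining Bessel polynomials is compared with the
quotient by Euler's transformation of the `₂F₁`.
-/

section BesselCoeff

/-- The coefficient `(p + j)! / ((p - j)! j!)` of `X ^ j` in the Bessel polynomial
`y_p(X) = ₂F₀(-p, p + 1; -X)`, written without division so that it vanishes for `p < j`. -/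
def besselCoeff (p j : ℕ) : ℕ := p.choose j * (p + 1).ascFactorial j

theorem besselCoeff_of_lt {p j : ℕ} (h : p < j) : besselCoeff p j = 0 := by
  rw [besselCoeff, Nat.choose_eq_zero_of_lt h, zero_mul]

theorem besselCoeff_zero_right (p : ℕ) : besselCoeff p 0 = 1 := by simp [besselCoeff]

theorem factorial_mul_factorial_mul_besselCoeff (s j : ℕ) :
    s.factorial * j.factorial * besselCoeff (s + j) j = (s + 2 * j).factorial := by
  calc s.factorial * j.factorial * besselCoeff (s + j) j
      = (s + j).choose j * s.factorial * j.factorial * (s + j + 1).ascFactorial j := by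
        rw [besselCoeff]; ring
    _ = (s + 2 * j).factorial := by
        rw [Nat.add_choose_mul_factorial_mul_factorial, Nat.factorial_mul_ascFactorial, add_assoc,
          two_mul]

theorem besselCoeff_succ_succ (p j : ℕ) :
    besselCoeff (p + 1) (j + 1) = besselCoeff p (j + 1) + 2 * (p + 1 + j) * besselCoeff p j := by
  have hasc := Nat.succ_ascFactorial (p + 1) j
  have hchoose := Nat.add_one_mul_choose_eq p j
  simp only [besselCoeff, Nat.ascFactorial_succ, Nat.choose_succ_succ'] at hchoose ⊢
  zify at hasc hchoose ⊢
  linear_combination (p.choose (j + 1) + 2 * p.choose j : ℤ) * hasc -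
    ((p + 1 + 1).ascFactorial j : ℤ) * hchoose

theorem add_one_mul_besselCoeff_succ (p j : ℕ) :
    (p + 1) * besselCoeff (p + 1) j =
      (p + 1 + j) * besselCoeff p j + j * besselCoeff (p + 1) j := by
  have hasc := Nat.succ_ascFactorial (p + 1) j
  have hchoose : (p + 1) * (p + 1).choose j = (p + 1) * p.choose j + j * (p + 1).choose j := by
    cases j with
    | zero => simp
    | succ j => linarith [Nat.add_one_mul_choose_eq p j, Nat.choose_succ_succ' p j,
        congrArg ((p + 1) * ·) (Nat.choose_succ_succ' p j)]
  simp only [besselCoeff]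
  zify at hasc hchoose ⊢
  linear_combination ((p + 1 + 1).ascFactorial j : ℤ) * hchoose + (p.choose j : ℤ) * hasc

theorem besselCoeff_mul_besselCoeff (d l v : ℕ) :
    besselCoeff d l * besselCoeff (d + l + v) v =
      besselCoeff (l + v) (l + v) *
        ((l + v).choose l * (d + l + 2 * v).choose (2 * (l + v))) := by
  obtain h | h := lt_or_ge d l
  · rw [besselCoeff_of_lt h, Nat.choose_eq_zero_of_lt (by omega : d + l + 2 * v < 2 * (l + v))]
    simp
  obtain ⟨u, rfl⟩ := Nat.exists_eq_add_of_le' h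
  have hleft : u.factorial * l.factorial * v.factorial *
      (besselCoeff (u + l) l * besselCoeff (u + l + l + v) v) =
      (u + 2 * (l + v)).factorial := by
    have h := factorial_mul_factorial_mul_besselCoeff (u + l + l) v
    rw [add_assoc u, ← two_mul, ← factorial_mul_factorial_mul_besselCoeff u l] at h
    rw [add_assoc u l l, ← two_mul, mul_add, ← add_assoc, ← h]
    ring
  have hcentral := factorial_mul_factorial_mul_besselCoeff 0 (l + v)
  have hchoose := Nat.add_choose_mul_factorial_mul_factorial v l
  refine Nat.eq_of_mul_eq_mul_left (by positivity : 0 < u.factorial * l.factorial * v.factorial) ?_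
  rw [hleft, ← Nat.add_choose_mul_factorial_mul_factorial u]
  simp only [Nat.factorial_zero, zero_add, one_mul, add_comm v l] at hcentral hchoose
  rw [← hcentral, ← hchoose]
  ring_nf

end BesselCoeff

section BesselSeries

open PowerSeries

variable {R : Type*} [CommRing R]

/-- The Bessel polynomial `y_p(c X)`, as a power series so that it can be multiplied with inverse
powers of `1 - X` and its coefficients can be read off without a degree bound. -/
def besselSeries (p : ℕ) (c : R) : R⟦X⟧ := PowerSeries.mk fun j => besselCoeff p j * c ^ j

theorem coeff_besselSeries (p : ℕ) (c : R) (j : ℕ) :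
    coeff j (besselSeries p c) = besselCoeff p j * c ^ j := coeff_mk _ _

theorem constantCoeff_besselSeries (p : ℕ) (c : R) : constantCoeff (besselSeries p c) = 1 := by
  rw [← coeff_zero_eq_constantCoeff_apply, coeff_besselSeries, besselCoeff_zero_right]
  simp

theorem besselSeries_zero (c : R) : besselSeries 0 c = 1 := by
  ext (_ | j)
  · simp [constantCoeff_besselSeries]
  · simp [coeff_besselSeries, besselCoeff_of_lt, coeff_one]

theorem coeff_succ_X_sq_mul_derivative (f : R⟦X⟧) (n : ℕ) :
    coeff (n + 1) (X ^ 2 * d⁄dX R f) = n * coeff n f := by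
  rw [pow_two, mul_assoc, coeff_succ_X_mul]
  cases n with
  | zero => simp
  | succ n => rw [coeff_succ_X_mul, coeff_derivative, mul_comm, Nat.cast_succ]

theorem besselSeries_succ (p : ℕ) (c : R) :
    besselSeries (p + 1) c =
      (1 + C (2 * (p + 1) * c) * X) * besselSeries p c +
        C (2 * c) * (X ^ 2 * d⁄dX R (besselSeries p c)) := by
  ext (_ | j)
  · simp [constantCoeff_besselSeries]
  · have hcoeff := congrArg (Nat.cast : ℕ → R) (besselCoeff_succ_succ p j)
    push_cast at hcoeff
    simp only [add_mul, one_mul, mul_assoc, map_add, coeff_C_mul, coeff_succ_X_mul,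
      coeff_succ_X_sq_mul_derivative, coeff_besselSeries]
    linear_combination c ^ (j + 1) * hcoeff

theorem besselSeries_eq_succ (p : ℕ) (c : R) :
    besselSeries p c =
      (1 - C (2 * (p + 1) * c) * X) * besselSeries (p + 1) c +
        C (2 * c) * (X ^ 2 * d⁄dX R (besselSeries (p + 1) c)) := by
  ext (_ | j)
  · simp [constantCoeff_besselSeries]
  · have hraise := congrArg (Nat.cast : ℕ → R) (besselCoeff_succ_succ p j)
    have hlower := congrArg (Nat.cast : ℕ → R) (add_one_mul_besselCoeff_succ p j)
    push_cast at hraise hlower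
    simp only [add_mul, sub_mul, one_mul, mul_assoc, map_add, map_sub, coeff_C_mul,
      coeff_succ_X_mul, coeff_succ_X_sq_mul_derivative, coeff_besselSeries]
    linear_combination -c ^ (j + 1) * hraise + 2 * c ^ (j + 1) * hlower

-- Truncation makes `M - 1 = 0` for `M = 0`, which is the convention `y_{-1} = y_0`.
theorem besselSeries_eq_pred (M : ℕ) (c : R) :
    besselSeries M c =
      (1 + C (2 * M * c) * X) * besselSeries (M - 1) c +
        C (2 * c) * (X ^ 2 * d⁄dX R (besselSeries (M - 1) c)) := by
  cases M with
  | zero => simp [besselSeries_zero]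
  | succ m => simpa using besselSeries_succ m c

theorem besselSeries_triple_contiguous (a : R) (M q n : ℕ) :
    C (1 - a) * (besselSeries M a * besselSeries (q + 1) (-(a * (1 - a))) *
        besselSeries n (1 - a)) +
      C a * (besselSeries (M - 1) a * besselSeries (q + 1) (-(a * (1 - a))) *
        besselSeries (n + 1) (1 - a)) -
      besselSeries (M - 1) a * besselSeries q (-(a * (1 - a))) * besselSeries n (1 - a) =
    C (2 * (a * (1 - a))) *
      (X ^ 2 * d⁄dX R (besselSeries (M - 1) a * besselSeries (q + 1) (-(a * (1 - a))) *
          besselSeries n (1 - a)) +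
        C (M + n - q : R) * (X * (besselSeries (M - 1) a *
          besselSeries (q + 1) (-(a * (1 - a))) * besselSeries n (1 - a)))) := by
  rw [besselSeries_eq_pred M, besselSeries_succ n, besselSeries_eq_succ q]
  generalize besselSeries (M - 1) a = A
  generalize besselSeries (q + 1) (-(a * (1 - a))) = D
  generalize besselSeries n (1 - a) = B
  simp only [Derivation.leibniz, smul_eq_mul, map_add, map_sub, map_mul, map_neg, map_one,
    map_ofNat, map_natCast]
  ring

theorem coeff_besselSeries_triple_contiguous (a : R) (M d N : ℕ) :
    (1 - a) * coeff (N + 1) (besselSeries M a * besselSeries (d + M + 1) (-(a * (1 - a))) *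
        besselSeries (d + N + 1) (1 - a)) +
      a * coeff (N + 1) (besselSeries (M - 1) a * besselSeries (d + M + 1) (-(a * (1 - a))) *
        besselSeries (d + N + 2) (1 - a)) -
      coeff (N + 1) (besselSeries (M - 1) a * besselSeries (d + M) (-(a * (1 - a))) *
        besselSeries (d + N + 1) (1 - a)) =
    2 * (2 * N + 1) * (a * (1 - a)) *
      coeff N (besselSeries (M - 1) a * besselSeries (d + M + 1) (-(a * (1 - a))) *
        besselSeries (d + N + 1) (1 - a)) := by
  have h := congrArg (coeff (N + 1)) (besselSeries_triple_contiguous a M (d + M) (d + N + 1))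
  simp only [map_sub (coeff (N + 1)), map_add (coeff (N + 1)), coeff_C_mul, coeff_succ_X_mul,
    coeff_succ_X_sq_mul_derivative] at h
  push_cast at h
  linear_combination h

end BesselSeries

section BinomialQuotient

open PowerSeries

variable {R : Type*} [CommRing R]

/-- The power series `(1 - aX) ^ q / (1 - X) ^ d`, whose coefficients are, up to normalization,
terminating `₂F₁` series in `a` and in `1 / a`. -/
noncomputable def binomialQuotient (a : R) (q d : ℕ) : R⟦X⟧ :=
  (1 - C a * X) ^ q * (invOneSubPow R d).val

theorem binomialQuotient_succ_left (a : R) (q d : ℕ) :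
    binomialQuotient a (q + 1) d = (1 - C a * X) * binomialQuotient a q d := by
  rw [binomialQuotient, pow_succ', mul_assoc, binomialQuotient]

theorem one_sub_X_mul_binomialQuotient_succ (a : R) (q d : ℕ) :
    (1 - X) * binomialQuotient a q (d + 1) = binomialQuotient a q d := by
  have h := one_sub_pow_mul_invOneSubPow_val_add_eq_invOneSubPow_val R d 1
  rw [binomialQuotient, binomialQuotient, ← h]
  ring

theorem constantCoeff_binomialQuotient (a : R) (q d : ℕ) :
    constantCoeff (binomialQuotient a q d) = 1 := by
  have hinv : constantCoeff (invOneSubPow R d).val = 1 := by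
    cases d with
    | zero => simp [invOneSubPow_zero]
    | succ d => simp [invOneSubPow_val_succ_eq_mk_add_choose, ← coeff_zero_eq_constantCoeff_apply]
  simp [binomialQuotient, hinv]

theorem coeff_succ_one_sub_C_mul_X_mul (a : R) (f : R⟦X⟧) (p : ℕ) :
    coeff (p + 1) ((1 - C a * X) * f) = coeff (p + 1) f - a * coeff p f := by
  rw [sub_mul, one_mul, mul_assoc, map_sub, coeff_C_mul, coeff_succ_X_mul]

theorem coeff_succ_binomialQuotient_diagonal (a : R) (p q : ℕ) :
    coeff (p + 1) (binomialQuotient a (q + 1) (q + 2)) =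
      coeff p (binomialQuotient a (q + 1) (q + 2)) +
        coeff (p + 1) (binomialQuotient a q (q + 1)) - a * coeff p (binomialQuotient a q (q + 1))
        := by
  have h := coeff_succ_one_sub_C_mul_X_mul 1 (binomialQuotient a (q + 1) (q + 2)) p
  rw [map_one, one_mul, one_sub_X_mul_binomialQuotient_succ, binomialQuotient_succ_left,
    coeff_succ_one_sub_C_mul_X_mul] at h
  linear_combination -h

-- `(1 - aX) ^ q / (1 - X) ^ (q + 1)` is the coefficient of `Y ^ q` in `1 / (1 - X - Y + a X Y)`.
theorem coeff_binomialQuotient_diagonal_comm (a : R) (p q : ℕ) :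
    coeff p (binomialQuotient a q (q + 1)) = coeff q (binomialQuotient a p (p + 1)) := by
  have hzero (p : ℕ) : coeff p (binomialQuotient a 0 (0 + 1)) = 1 := by
    simp [binomialQuotient, invOneSubPow_val_succ_eq_mk_add_choose]
  induction p generalizing q with
  | zero => simp [hzero, constantCoeff_binomialQuotient]
  | succ p ihp =>
    induction q with
    | zero => simp [hzero, constantCoeff_binomialQuotient]
    | succ q ihq =>
      rw [coeff_succ_binomialQuotient_diagonal, coeff_succ_binomialQuotient_diagonal,
        ihp, ihp, ihq]
      ring

theorem binomialQuotient_succ_succ (a : R) (q d : ℕ) :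
    binomialQuotient a (q + 1) (d + 1) =
      C a * binomialQuotient a q d + C (1 - a) * binomialQuotient a q (d + 1) := by
  rw [binomialQuotient_succ_left, ← one_sub_X_mul_binomialQuotient_succ a q d, map_sub, map_one]
  ring

theorem coeff_binomialQuotient_euler (a : R) (d p j : ℕ) :
    coeff (p + j) (binomialQuotient a (d + j) (d + 1)) =
      (1 - a) ^ j * coeff d (binomialQuotient a p (p + j + 1)) := by
  induction j generalizing p with
  | zero => simpa using coeff_binomialQuotient_diagonal_comm a p d
  | succ j ih =>
    have hshift := ih (p + 1)
    rw [Nat.add_right_comm p 1 j, binomialQuotient_succ_succ, map_add, coeff_C_mul, coeff_C_mul]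
      at hshift
    rw [← add_assoc, ← add_assoc, binomialQuotient_succ_left, coeff_succ_one_sub_C_mul_X_mul,
      hshift, ih, pow_succ]
    ring

theorem coeff_binomialQuotient_eq_sum (a : R) {q d p : ℕ} (h : q ≤ d + p) :
    coeff p (binomialQuotient a q (d + 1)) =
      ∑ r ∈ range (q + 1), (-a) ^ r * q.choose r * (d + p - r).choose d := by
  have hexpand : binomialQuotient a q (d + 1) = ∑ r ∈ range (q + 1),
      C ((-a) ^ r * q.choose r) * (X ^ r * (invOneSubPow R (d + 1)).val) := by
    rw [binomialQuotient, sub_eq_neg_add, add_pow, sum_mul]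
    refine sum_congr rfl fun r _ => ?_
    rw [← neg_mul, ← map_neg, mul_pow, map_mul, map_pow, map_natCast, one_pow]
    ring
  rw [hexpand, map_sum]
  refine sum_congr rfl fun r hr => ?_
  rw [coeff_C_mul, coeff_X_pow_mul', invOneSubPow_val_succ_eq_mk_add_choose, coeff_mk]
  split_ifs with hrp
  · rw [Nat.add_sub_assoc hrp]
  · rw [Nat.choose_eq_zero_of_lt (by grind : d + p - r < d), Nat.cast_zero]

theorem coeff_binomialQuotient_contiguous (a : R) (q d p : ℕ) :
    (1 - a) * coeff (p + 2) (binomialQuotient a (q + 1) (d + 1)) +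
        a * coeff (p + 2) (binomialQuotient a (q + 1) (d + 2)) -
        coeff (p + 2) (binomialQuotient a q (d + 1)) =
      a * (1 - a) * coeff p (binomialQuotient a q (d + 2)) := by
  have h : C (1 - a) * binomialQuotient a (q + 1) (d + 1) +
      C a * binomialQuotient a (q + 1) (d + 2) - binomialQuotient a q (d + 1) =
      C (a * (1 - a)) * (X ^ 2 * binomialQuotient a q (d + 2)) := by
    simp only [binomialQuotient_succ_left, ← one_sub_X_mul_binomialQuotient_succ a q (d + 1),
      map_mul, map_sub, map_one]
    ring
  simpa only [map_sub (coeff (p + 2)), map_add, coeff_C_mul, coeff_X_pow_mul] using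
    congrArg (coeff (p + 2)) h

end BinomialQuotient

section TripleProduct

open PowerSeries

variable {R : Type*} [CommRing R]

theorem coeff_besselSeries_mul (a b : R) (d N : ℕ) :
    coeff N (besselSeries d (-(a * b)) * besselSeries (d + N) b) =
      besselCoeff N N * b ^ N * coeff d (binomialQuotient a N (2 * N + 1)) := by
  rw [coeff_binomialQuotient_eq_sum a (by omega), coeff_mul,
    Finset.Nat.sum_antidiagonal_eq_sum_range_succ_mk, mul_sum]
  refine sum_congr rfl fun l hl => ?_
  obtain ⟨v, rfl⟩ := Nat.exists_eq_add_of_le (mem_range_succ_iff.1 hl)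
  have hcoeff := congrArg (Nat.cast : ℕ → R) (besselCoeff_mul_besselCoeff d l v)
  push_cast at hcoeff
  rw [coeff_besselSeries, coeff_besselSeries, Nat.add_sub_cancel_left, ← add_assoc d,
    show 2 * (l + v) + d - l = d + l + 2 * v by omega, ← neg_mul, mul_pow, pow_add]
  linear_combination ((-a) ^ l * b ^ l * b ^ v) * hcoeff

theorem coeff_besselSeries_triple {a : R} (ha : IsLeftRegular (1 - a)) (M d N : ℕ) :
    coeff N (besselSeries (M - 1) a * besselSeries (d + M) (-(a * (1 - a))) *
        besselSeries (d + N) (1 - a)) =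
      besselCoeff N N * coeff (2 * N) (binomialQuotient a (d + M + N) (d + 1)) := by
  induction M generalizing d N with
  | zero =>
    rw [Nat.zero_sub, besselSeries_zero, one_mul, add_zero, coeff_besselSeries_mul, two_mul,
      coeff_binomialQuotient_euler, mul_assoc]
  | succ M ih =>
    cases N with
    | zero =>
      simp [constantCoeff_besselSeries, constantCoeff_binomialQuotient, besselCoeff_zero_right]
    | succ N =>
      have hbessel := coeff_besselSeries_triple_contiguous a M d N
      have hquotient := coeff_binomialQuotient_contiguous a (d + M + N + 1) d (2 * N)
      have hcentral : (besselCoeff (N + 1) (N + 1) : R) = 2 * (2 * N + 1) * besselCoeff N N := by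
        rw [besselCoeff_succ_succ, besselCoeff_of_lt N.lt_succ_self]
        push_cast
        ring
      have ih₁ := ih (d + 1) (N + 1)
      have ih₂ := ih d (N + 1)
      have ih₃ := ih (d + 1) N
      simp only [Nat.add_right_comm d 1, Nat.add_right_comm (d + M) 1, ← add_assoc, mul_add_one,
        Nat.add_sub_cancel, hcentral] at hbessel ih₁ ih₂ ih₃ ⊢
      rw [ih₁, ih₂, ih₃] at hbessel
      refine ha (?_ : (1 - a) * _ = (1 - a) * _)
      linear_combination hbessel - 2 * (2 * N + 1) * (besselCoeff N N : R) * hquotient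

end TripleProduct

section Pochhammer

theorem poch_eq_ascPochhammer_eval (z : ℝ) (r : ℕ) : poch z r = (ascPochhammer ℝ r).eval z := by
  induction r with
  | zero => simp [poch]
  | succ r ih => rw [ascPochhammer_succ_eval, ← ih, poch, prod_range_succ, poch]

theorem poch_natCast_add_one (x r : ℕ) : poch ((x : ℝ) + 1) r = (x + 1).ascFactorial r := by
  rw [poch_eq_ascPochhammer_eval, ← Nat.cast_succ, ascPochhammer_nat_eq_natCast_ascFactorial]

theorem poch_natCast_add_one_pos (x r : ℕ) : 0 < poch ((x : ℝ) + 1) r := by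
  rw [poch_eq_ascPochhammer_eval]
  exact ascPochhammer_pos r _ x.cast_add_one_pos

theorem poch_neg (z : ℝ) (r : ℕ) : poch (-z) r = (-1) ^ r * poch (z - r + 1) r := by
  rw [poch_eq_ascPochhammer_eval, ascPochhammer_eval_neg_eq_descPochhammer,
    descPochhammer_eval_eq_ascPochhammer, poch_eq_ascPochhammer_eval]

theorem poch_natCast_sub_add_one (x r : ℕ) :
    poch ((x : ℝ) - r + 1) r = x.descFactorial r := by
  rw [poch_eq_ascPochhammer_eval, ← descPochhammer_eval_eq_ascPochhammer,
    descPochhammer_eval_eq_descFactorial]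

theorem poch_neg_natCast (x r : ℕ) : poch (-(x : ℝ)) r = (-1) ^ r * x.descFactorial r := by
  rw [poch_neg, poch_natCast_sub_add_one]

theorem poch_add (z : ℝ) (r s : ℕ) : poch z (r + s) = poch z r * poch (z + r) s := by
  simp only [poch, prod_range_add, Nat.cast_add, add_assoc]

theorem poch_neg_natCast_div_factorial (x r : ℕ) :
    poch (-(x : ℝ)) r / r.factorial = (-1) ^ r * x.choose r := by
  rw [poch_neg_natCast, Nat.descFactorial_eq_factorial_mul_choose]
  push_cast
  field_simp

theorem poch_mul_poch_neg_div_factorial (p l : ℕ) :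
    poch ((p : ℝ) + 1) l * poch (-(p : ℝ)) l / l.factorial = (-1) ^ l * besselCoeff p l := by
  rw [mul_div_assoc, poch_neg_natCast_div_factorial, poch_natCast_add_one, besselCoeff]
  push_cast
  ring

theorem add_choose_eq_mul_poch_div_poch (d f s : ℕ) :
    ((d + (f + s)).choose d : ℝ) = (d + f).factorial / (f.factorial * d.factorial) *
      (poch (((d + f : ℕ) : ℝ) + 1) s / poch ((f : ℝ) + 1) s) := by
  have hne := (poch_natCast_add_one_pos f s).ne'
  rw [poch_natCast_add_one] at hne
  rw [Nat.cast_add_choose, ← add_assoc, ← Nat.factorial_mul_ascFactorial (d + f),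
    ← Nat.factorial_mul_ascFactorial f, poch_natCast_add_one, poch_natCast_add_one]
  push_cast
  field_simp

theorem poch_sub_add_one_two_mul (m j : ℕ) :
    poch ((m : ℝ) - j + 1) (2 * j) = j.factorial * besselCoeff m j := by
  rw [two_mul, poch_add, poch_natCast_sub_add_one, Nat.descFactorial_eq_factorial_mul_choose,
    show (m : ℝ) - j + 1 + j = m + 1 by ring, poch_natCast_add_one, besselCoeff]
  push_cast
  ring

theorem poch_neg_div_poch_neg_mul_poch (m j l : ℕ) :
    poch (-((j + l : ℕ) : ℝ)) l / poch (-((m + (j + l) : ℕ) : ℝ)) l *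
        poch ((m : ℝ) - j + 1) (2 * j + l) =
      (j + l).factorial * besselCoeff m j := by
  have hsplit : poch ((m : ℝ) - j + 1) (2 * j + l) =
      j.factorial * besselCoeff m j * poch (((m + j : ℕ) : ℝ) + 1) l := by
    rw [poch_add, poch_sub_add_one_two_mul]
    push_cast
    ring_nf
  have hpos := poch_natCast_add_one_pos (m + j) l
  have hfactorial := Nat.factorial_mul_ascFactorial j l
  rw [hsplit, poch_neg, poch_neg, show ((m + (j + l) : ℕ) : ℝ) - l + 1 = (m + j : ℕ) + 1 by
      push_cast; ring, show ((j + l : ℕ) : ℝ) - l + 1 = j + 1 by push_cast; ring,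
    poch_natCast_add_one j, ← hfactorial, Nat.cast_mul]
  field_simp

theorem choose_mul_poch_mul_factorial (d : ℕ) {N i : ℕ} (h : i ≤ N) :
    (N.choose i : ℝ) * poch (((d + i : ℕ) : ℝ) + 1) (2 * (N - i)) * i.factorial =
      N.factorial * besselCoeff (d + N) (N - i) := by
  have hpoch := poch_sub_add_one_two_mul (d + N) (N - i)
  rw [show ((d + N : ℕ) : ℝ) - (N - i : ℕ) + 1 = (d + i : ℕ) + 1 by
    rw [Nat.cast_sub h]; push_cast; ring] at hpoch
  rw [hpoch, ← Nat.choose_mul_factorial_mul_factorial h]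
  push_cast
  ring

end Pochhammer

section HypergeometricSums

open PowerSeries

theorem pow_mul_sum_poch_eq_coeff (a b : ℝ) (k m i : ℕ) :
    a ^ i * ∑ l ∈ range (i + 1),
        poch ((k : ℝ) + 2) l * poch (-(k : ℝ) - 1) l * poch (-(i : ℝ)) l /
            (poch (-(m : ℝ) - (i : ℝ)) l * (l.factorial : ℝ)) *
          poch ((m : ℝ) - (i : ℝ) + 1 + (l : ℝ)) (2 * i - l) * b ^ l =
      i.factorial * coeff i (besselSeries (k + 1) (-(a * b)) * besselSeries m a) := by
  rw [coeff_mul, Finset.Nat.sum_antidiagonal_eq_sum_range_succ_mk, mul_sum, mul_sum]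
  refine sum_congr rfl fun l hl => ?_
  obtain ⟨j, rfl⟩ := Nat.exists_eq_add_of_le' (mem_range_succ_iff.1 hl)
  have hbessel := poch_mul_poch_neg_div_factorial (k + 1) l
  have hquotient := poch_neg_div_poch_neg_mul_poch m j l
  rw [show ((k + 1 : ℕ) : ℝ) + 1 = k + 2 by push_cast; ring,
    show -((k + 1 : ℕ) : ℝ) = -k - 1 by push_cast; ring] at hbessel
  rw [show -((m + (j + l) : ℕ) : ℝ) = -m - (j + l : ℕ) by push_cast; ring,
    show (m : ℝ) - j + 1 = m - (j + l : ℕ) + 1 + l by push_cast; ring,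
    show 2 * j + l = 2 * (j + l) - l by omega] at hquotient
  rw [coeff_besselSeries, coeff_besselSeries, Nat.add_sub_cancel]
  calc _ = a ^ (j + l) * (poch ((k : ℝ) + 2) l * poch (-(k : ℝ) - 1) l / l.factorial) *
        (poch (-((j + l : ℕ) : ℝ)) l / poch (-(m : ℝ) - (j + l : ℕ)) l *
          poch ((m : ℝ) - (j + l : ℕ) + 1 + l) (2 * (j + l) - l)) * b ^ l := by
        ring
    _ = _ := by
        rw [hbessel, hquotient, neg_pow (a * b), mul_pow, pow_add]
        ring

theorem sum_poch_eq_coeff {a : ℝ} (ha : a ≠ 1) (m d N : ℕ) :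
    ∑ i ∈ range (N + 1),
      a ^ i * (N.choose i : ℝ) *
        poch (-(m : ℝ) + ((m + d : ℕ) : ℝ) + (i : ℝ) + 1) (2 * (N - i)) *
        (1 - a) ^ (-(i : ℤ)) *
      ∑ l ∈ range (i + 1),
        poch (((m + d : ℕ) : ℝ) + 2) l * poch (-((m + d : ℕ) : ℝ) - 1) l * poch (-(i : ℝ)) l /
            (poch (-(m : ℝ) - (i : ℝ)) l * (l.factorial : ℝ)) *
          poch ((m : ℝ) - (i : ℝ) + 1 + (l : ℝ)) (2 * i - l) * (1 - a) ^ l =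
    (1 - a) ^ (-(N : ℤ)) * (N.factorial * coeff N (besselSeries m a *
      besselSeries (m + d + 1) (-(a * (1 - a))) * besselSeries (d + N) (1 - a))) := by
  have hb : 1 - a ≠ 0 := sub_ne_zero.2 ha.symm
  rw [mul_comm (besselSeries m a), coeff_mul, Finset.Nat.sum_antidiagonal_eq_sum_range_succ_mk,
    mul_sum, mul_sum]
  refine sum_congr rfl fun i hi => ?_
  have hi' : i ≤ N := mem_range_succ_iff.1 hi
  have hinner := pow_mul_sum_poch_eq_coeff a (1 - a) (m + d) m i
  have hpoch := choose_mul_poch_mul_factorial d hi'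
  have hpow : (1 - a) ^ (-(N : ℤ)) * (1 - a) ^ (N - i) = (1 - a) ^ (-(i : ℤ)) := by
    rw [← zpow_natCast, ← zpow_add₀ hb, Nat.cast_sub hi', neg_add_eq_sub, sub_sub_cancel_left]
  rw [show ((d + i : ℕ) : ℝ) + 1 = -m + (m + d : ℕ) + i + 1 by push_cast; ring] at hpoch
  rw [coeff_besselSeries (d + N), ← hpow]
  linear_combination (N.choose i : ℝ) *
      poch (-(m : ℝ) + (m + d : ℕ) + i + 1) (2 * (N - i)) *
      ((1 - a) ^ (-(N : ℤ)) * (1 - a) ^ (N - i)) * hinner +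
    coeff i (besselSeries (m + d + 1) (-(a * (1 - a))) * besselSeries m a) *
      ((1 - a) ^ (-(N : ℤ)) * (1 - a) ^ (N - i)) * hpoch

theorem coeff_binomialQuotient_eq_sum_poch {a : ℝ} (ha : a ≠ 0) (d f P : ℕ) :
    coeff (P + f) (binomialQuotient a P (d + 1)) =
      (-a) ^ P * ((d + f).factorial / (f.factorial * d.factorial)) *
        ∑ s ∈ range (P + 1), poch (((d + f : ℕ) : ℝ) + 1) s * poch (-(P : ℝ)) s /
          (poch ((f : ℝ) + 1) s * (s.factorial : ℝ)) * a ^ (-(s : ℤ)) := by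
  rw [coeff_binomialQuotient_eq_sum a (by omega), ← sum_flip, mul_sum]
  refine sum_congr rfl fun s hs => ?_
  obtain ⟨u, rfl⟩ := Nat.exists_eq_add_of_le' (mem_range_succ_iff.1 hs)
  have hpow : (-a) ^ (u + s) * (-1) ^ s * a ^ (-(s : ℤ)) = (-a) ^ u := by
    rw [pow_add, mul_assoc ((-a) ^ u), ← mul_pow, neg_mul_neg, mul_one, mul_assoc, zpow_neg,
      zpow_natCast, mul_inv_cancel₀ (pow_ne_zero s ha), mul_one]
  have hbinomial := poch_neg_natCast_div_factorial (u + s) s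
  have hchoose := add_choose_eq_mul_poch_div_poch d f s
  rw [Nat.add_sub_cancel, show d + (u + s + f) - u = d + (f + s) by omega, hchoose, ← hpow,
    Nat.choose_symm_add]
  linear_combination -(-a) ^ (u + s) * a ^ (-(s : ℤ)) *
    ((d + f).factorial / (f.factorial * d.factorial) *
      (poch (((d + f : ℕ) : ℝ) + 1) s / poch ((f : ℝ) + 1) s)) * hbinomial

theorem factorial_mul_coeff_besselSeries_triple {a : ℝ} (ha0 : a ≠ 0) (ha1 : a ≠ 1)
    {m d f N : ℕ} (hN : N = m + 1 + (d + f)) :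
    N.factorial * coeff N (besselSeries m a * besselSeries (m + d + 1) (-(a * (1 - a))) *
        besselSeries (d + N) (1 - a)) =
      (-a) ^ (d + N + m + 1) *
        ((2 * N).factorial * (d + f).factorial / (f.factorial * d.factorial)) *
        ∑ s ∈ range (d + N + m + 2), poch (((d + f : ℕ) : ℝ) + 1) s *
          poch (-((d + N + m + 1 : ℕ) : ℝ)) s / (poch ((f : ℝ) + 1) s * (s.factorial : ℝ)) *
          a ^ (-(s : ℤ)) := by
  have hregular : IsLeftRegular (1 - a) := (IsRegular.of_ne_zero (sub_ne_zero.2 ha1.symm)).left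
  have htriple := coeff_besselSeries_triple hregular (m + 1) d N
  have hcentral := congrArg (Nat.cast : ℕ → ℝ) (factorial_mul_factorial_mul_besselCoeff 0 N)
  rw [Nat.add_sub_cancel, show d + (m + 1) + N = d + N + m + 1 by ring,
    show d + (m + 1) = m + d + 1 by ring, show 2 * N = d + N + m + 1 + f by omega,
    coeff_binomialQuotient_eq_sum_poch ha0] at htriple
  simp only [Nat.factorial_zero, zero_add, one_mul, Nat.cast_mul] at hcentral
  rw [htriple, ← hcentral]
  ring

end HypergeometricSums

/-- Reduction of a sum of terminating `₃F₂`'s to a terminating `₂F₁`, in the range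
`m ≤ k`, `2k ≤ n+m−1`: the left-hand side is
`(−a)^{n+m+1} (1−a)^{k−m−n} (Γ(2n+2m−2k+1)Γ(n−k)/(Γ(n+m−2k)Γ(k−m+1)))
  ₂F₁(n−k, −n−m−1; n+m−2k; 1/a)`
and the inner sums on the right are the regularized terminating series
`(m−i+1)_{2i} ⬝ ₃F₂(k+2, −k−1, −i; −m−i, m−i+1; 1−a)`. -/
theorem sum_3F2_reduction_low (n m k : ℕ) (hk1 : m ≤ k) (hk2 : 2 * k + 1 ≤ n + m)
    (a : ℝ) (ha0 : a ≠ 0) (ha1 : a ≠ 1) :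
    (-a) ^ (n + m + 1) * (1 - a) ^ ((k : ℤ) - (m : ℤ) - (n : ℤ)) *
        ((((2 * n + 2 * m - 2 * k).factorial : ℝ) * ((n - k - 1).factorial : ℝ)) /
          (((n + m - 2 * k - 1).factorial : ℝ) * ((k - m).factorial : ℝ))) *
      (∑ s ∈ Finset.range (n + m + 2),
        poch ((n : ℝ) - (k : ℝ)) s * poch (-(n : ℝ) - (m : ℝ) - 1) s /
            (poch ((n : ℝ) + (m : ℝ) - 2 * (k : ℝ)) s * (s.factorial : ℝ)) *
          a ^ (-(s : ℤ))) =
    ∑ i ∈ Finset.range (m + n - k + 1),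
      a ^ i * ((m + n - k).choose i : ℝ) *
        poch (-(m : ℝ) + (k : ℝ) + (i : ℝ) + 1) (2 * (m + n - k - i)) *
        (1 - a) ^ (-(i : ℤ)) *
      ∑ l ∈ Finset.range (i + 1),
        poch ((k : ℝ) + 2) l * poch (-(k : ℝ) - 1) l * poch (-(i : ℝ)) l /
            (poch (-(m : ℝ) - (i : ℝ)) l * (l.factorial : ℝ)) *
          poch ((m : ℝ) - (i : ℝ) + 1 + (l : ℝ)) (2 * i - l) * (1 - a) ^ l := by
  obtain ⟨d, rfl⟩ := Nat.exists_eq_add_of_le hk1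
  obtain ⟨N, rfl⟩ := Nat.exists_eq_add_of_le (by omega : d ≤ n)
  obtain ⟨f, hN⟩ : ∃ f, N = m + 1 + (d + f) := ⟨N - (m + 1 + d), by omega⟩
  have hNreal : (N : ℝ) = m + 1 + (d + f) := by rw [hN]; push_cast; ring
  rw [show m + (d + N) - (m + d) = N by omega, sum_poch_eq_coeff ha1,
    factorial_mul_coeff_besselSeries_triple ha0 ha1 hN,
    show 2 * (d + N) + 2 * m - 2 * (m + d) = 2 * N by omega,
    show d + N - (m + d) - 1 = d + f by omega, show d + N + m - 2 * (m + d) - 1 = f by omega,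
    Nat.add_sub_cancel_left,
    show ((m + d : ℕ) : ℤ) - m - (d + N : ℕ) = -N by push_cast; ring,
    show ((d + N : ℕ) : ℝ) - (m + d : ℕ) = (d + f : ℕ) + 1 by push_cast [hNreal]; ring,
    show -((d + N : ℕ) : ℝ) - m - 1 = -(d + N + m + 1 : ℕ) by push_cast; ring,
    show ((d + N : ℕ) : ℝ) + m - 2 * (m + d : ℕ) = f + 1 by push_cast [hNreal]; ring]
  ring
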